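/- Let (W, S) be the Coxeter system of type B₃ over B = {1, 2, 3}, i.e. with Coxeter matrix M 1 2 = 4, M 2 3 = 3, M 1 3 = 2. Let (i₁, …, i₄₈) be the sequence (1,2,1,2,1,2,3,2,1,2,1,2,3,2,1,2,3,2,1,2,3,2,3,2,1,2,1,2,1,2,3,2,1,2,1,2,3,2,1,2,3,2,1,2,3,2,3,2), and define x₀ = 1 and x_k = s_{i_k} · x_{k−1} for 1 ≤ k ≤ 48. Then x₀, x₁, …, x₄₇ are pairwise distinct and exhaust W (so |W| = 48), and x₄₈ = 1; hence this sequence traces a Hamilton circuit of the Cayley graph of the Weyl group of type B₃, in which every second edge is labeled s₂. -/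

import Mathlib

/-- The label sequence (s₁,s₂,s₁,s₂,s₁,s₂,s₃,s₂,…) of the Hamilton circuit of the
Weyl group of type B₃, written with `0`-indexed generators (`0 ↦ s₁`, `1 ↦ s₂`,
`2 ↦ s₃`). -/
def b3HamiltonSeq : List (Fin 3) :=
  [0, 1, 0, 1, 0, 1, 2, 1, 0, 1, 0, 1, 2, 1, 0, 1, 2, 1, 0, 1, 2, 1, 2, 1,
   0, 1, 0, 1, 0, 1, 2, 1, 0, 1, 0, 1, 2, 1, 0, 1, 2, 1, 0, 1, 2, 1, 2, 1]

/-- The simple reflections of type B₃ as signed permutations: `0,1,2` are the positive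
letters and `3,4,5` their negatives. -/
def b3Perm : Fin 3 → Equiv.Perm (Fin 6) :=
  ![Equiv.swap 0 3, Equiv.swap 0 1 * Equiv.swap 3 4, Equiv.swap 1 2 * Equiv.swap 4 5]

/-- The walk in the signed permutation group. -/
def b3Walk : ℕ → Equiv.Perm (Fin 6)
  | 0 => 1
  | k + 1 => b3Perm (b3HamiltonSeq.getD k 0) * b3Walk k

theorem b3Walk_inj : ∀ k l : Fin 48, b3Walk k = b3Walk l → k = l := by
  decide +kernel

theorem b3Walk_end : b3Walk 48 = 1 := by
  decide +kernel

theorem b3Perm_liftable (M : CoxeterMatrix (Fin 3))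
    (h12 : M 0 1 = 4) (h23 : M 1 2 = 3) (h13 : M 0 2 = 2) : M.IsLiftable b3Perm := by
  have h21 : M 1 0 = 4 := by rw [M.symmetric]; exact h12
  have h32 : M 2 1 = 3 := by rw [M.symmetric]; exact h23
  have h31 : M 2 0 = 2 := by rw [M.symmetric]; exact h13
  intro i j
  fin_cases i <;> fin_cases j <;>
    simp only [Fin.zero_eta, Fin.mk_one, Fin.reduceFinMk, M.diagonal,
      h12, h23, h13, h21, h32, h31] <;> decide +kernel

/-- Elements of the dihedral parabolic subgroup of order 8. -/
def b3H {W : Type*} [Group W] (a b : W) : Fin 8 → W :=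
  ![1, a, b, a * b, b * a, a * (b * a), b * (a * b), a * (b * (a * b))]

/-- Left coset representatives of the dihedral parabolic subgroup. -/
def b3R {W : Type*} [Group W] (a b c : W) : Fin 6 → W :=
  ![1, c, b * c, a * (b * c), b * (a * (b * c)), c * (b * (a * (b * c)))]

theorem b3_exhaust {W : Type*} [Group W] (a b c : W)
    (haa : a * a = 1) (hbb : b * b = 1) (hcc : c * c = 1)
    (hab : b * (a * (b * a)) = a * (b * (a * b)))
    (hbc : c * (b * c) = b * (c * b)) (hac : c * a = a * c) :
    (∀ j, ∃ j', a * b3H a b j = b3H a b j') ∧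
    (∀ j, ∃ j', b * b3H a b j = b3H a b j') ∧
    (∀ i, ∃ i', a * b3R a b c i = b3R a b c i' ∨ a * b3R a b c i = b3R a b c i' * a) ∧
    (∀ i, ∃ i', b * b3R a b c i = b3R a b c i' ∨ b * b3R a b c i = b3R a b c i' * b) ∧
    (∀ i, ∃ i', c * b3R a b c i = b3R a b c i' ∨ c * b3R a b c i = b3R a b c i' * b) := by
  have haa' : ∀ x, a * (a * x) = x := fun x => by rw [← mul_assoc, haa, one_mul]
  have hbb' : ∀ x, b * (b * x) = x := fun x => by rw [← mul_assoc, hbb, one_mul]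
  have hcc' : ∀ x, c * (c * x) = x := fun x => by rw [← mul_assoc, hcc, one_mul]
  have hac' : ∀ x, c * (a * x) = a * (c * x) := fun x => by
    rw [← mul_assoc, hac, mul_assoc]
  have hbc' : ∀ x, c * (b * (c * x)) = b * (c * (b * x)) := fun x => by
    have := congrArg (· * x) hbc
    simpa only [mul_assoc] using this
  have hab' : ∀ x, b * (a * (b * (a * x))) = a * (b * (a * (b * x))) := fun x => by
    have := congrArg (· * x) hab
    simpa only [mul_assoc] using this
  -- The three nontrivial coset identities.
  have e1 : a * (b * (a * (b * c))) = b * (a * (b * (c * a))) := by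
    rw [hac, hab']
  have e2 : b * (c * (b * (a * (b * c)))) = c * (b * (a * (b * (c * b)))) := by
    rw [← hbc, ← hac', hbc']
  have e3 : a * (c * (b * (a * (b * c)))) = c * (b * (a * (b * (c * a)))) := by
    rw [← hac', e1]
  have e4 : c * (a * (b * c)) = a * (b * (c * b)) := by rw [hac', hbc]
  refine ⟨?_, ?_, ?_, ?_, ?_⟩
  · intro j
    refine ⟨![1, 0, 3, 2, 5, 4, 7, 6] j, ?_⟩
    fin_cases j <;> simp [b3H, haa, haa']
  · intro j
    refine ⟨![2, 4, 0, 6, 1, 7, 3, 5] j, ?_⟩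
    fin_cases j <;> simp [b3H, hbb, hbb', hab]
    rw [← hab, hbb']
  · intro i
    refine ⟨![0, 1, 3, 2, 4, 5] i, ?_⟩
    fin_cases i <;> simp [b3R, haa', mul_assoc, hac, e1, e3]
  · intro i
    refine ⟨![0, 2, 1, 4, 3, 5] i, ?_⟩
    fin_cases i <;> simp [b3R, hbb', mul_assoc, e2]
  · intro i
    refine ⟨![1, 0, 2, 3, 5, 4] i, ?_⟩
    fin_cases i <;> simp [b3R, hcc, hcc', mul_assoc, hbc, e4]

/-- The explicit word of Example 2.3 traces a Hamilton circuit of the Cayley graph of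
the Weyl group of type B₃ (Coxeter matrix `M 1 2 = 4`, `M 2 3 = 3`, `M 1 3 = 2`):
setting `x₀ = 1` and `x_k = s_{i_k} · x_{k-1}` along the sequence `b3HamiltonSeq`,
the elements `x₀, …, x₄₇` are pairwise distinct and exhaust `W` (so `|W| = 48`),
and `x₄₈ = 1`. -/
theorem weylGroup_B3_explicit_hamiltonCircuit
    {W : Type*} [Group W]
    (M : CoxeterMatrix (Fin 3)) (cs : CoxeterSystem M W)
    (h12 : M 0 1 = 4) (h23 : M 1 2 = 3) (h13 : M 0 2 = 2)
    (x : ℕ → W) (hx0 : x 0 = 1)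
    (hx : ∀ k, k < 48 → x (k + 1) = cs.simple (b3HamiltonSeq.getD k 0) * x k) :
    (∀ k l, k < 48 → l < 48 → x k = x l → k = l) ∧
    (∀ w : W, ∃ k, k < 48 ∧ x k = w) ∧
    Nat.card W = 48 ∧
    x 48 = 1 := by
  classical
  have sq : ∀ i, cs.simple i * cs.simple i = 1 := cs.simple_mul_simple_self
  have inv : ∀ i, (cs.simple i)⁻¹ = cs.simple i := cs.inv_simple
  have hab : cs.simple 1 * (cs.simple 0 * (cs.simple 1 * cs.simple 0)) =
      cs.simple 0 * (cs.simple 1 * (cs.simple 0 * cs.simple 1)) := by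
    have h := cs.simple_mul_simple_pow 0 1
    rw [h12] at h
    have h' : (cs.simple 0 * (cs.simple 1 * (cs.simple 0 * cs.simple 1))) *
        (cs.simple 0 * (cs.simple 1 * (cs.simple 0 * cs.simple 1))) = 1 := by
      simpa only [pow_succ, pow_zero, one_mul, mul_assoc] using h
    have h'' := eq_inv_of_mul_eq_one_left h'
    rw [h'']
    simp only [mul_inv_rev, inv, mul_assoc]
  have hbc : cs.simple 2 * (cs.simple 1 * cs.simple 2) =
      cs.simple 1 * (cs.simple 2 * cs.simple 1) := by
    have h := cs.simple_mul_simple_pow 1 2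
    rw [h23] at h
    have h' : (cs.simple 1 * (cs.simple 2 * cs.simple 1)) *
        (cs.simple 2 * (cs.simple 1 * cs.simple 2)) = 1 := by
      simpa only [pow_succ, pow_zero, one_mul, mul_assoc] using h
    have h'' := eq_inv_of_mul_eq_one_left h'
    rw [h'']
    simp only [mul_inv_rev, inv, mul_assoc]
  have hac : cs.simple 2 * cs.simple 0 = cs.simple 0 * cs.simple 2 := by
    have h := cs.simple_mul_simple_pow 0 2
    rw [h13, pow_two] at h
    have h'' := eq_inv_of_mul_eq_one_left h
    rw [h'']
    simp only [mul_inv_rev, inv]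
  obtain ⟨Ha, Hb, Ra, Rb, Rc⟩ := b3_exhaust (cs.simple 0) (cs.simple 1) (cs.simple 2)
    (sq 0) (sq 1) (sq 2) hab hbc hac
  let F : Fin 6 × Fin 8 → W := fun p =>
    b3R (cs.simple 0) (cs.simple 1) (cs.simple 2) p.1 * b3H (cs.simple 0) (cs.simple 1) p.2
  have hF : Function.Surjective F := by
    intro w
    induction w using cs.simple_induction_left with
    | one => exact ⟨(0, 0), by simp [F, b3R, b3H]⟩
    | mul_simple_left w i ih =>
      obtain ⟨⟨r, j⟩, rfl⟩ := ih
      -- moving a generator past a coset representative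
      have key : ∀ t u : W, (∀ j, ∃ j', u * b3H (cs.simple 0) (cs.simple 1) j =
            b3H (cs.simple 0) (cs.simple 1) j') →
          (∃ i', t * b3R (cs.simple 0) (cs.simple 1) (cs.simple 2) r =
              b3R (cs.simple 0) (cs.simple 1) (cs.simple 2) i' ∨
            t * b3R (cs.simple 0) (cs.simple 1) (cs.simple 2) r =
              b3R (cs.simple 0) (cs.simple 1) (cs.simple 2) i' * u) →
          ∃ p, F p = t * F (r, j) := by
        rintro t u hu ⟨i', h | h⟩
        · exact ⟨(i', j), by simp only [F]; rw [← mul_assoc, h]⟩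
        · obtain ⟨j', hj'⟩ := hu j
          exact ⟨(i', j'), by simp only [F]; rw [← mul_assoc, h, mul_assoc, hj']⟩
      fin_cases i
      · exact key _ _ Ha (Ra r)
      · exact key _ _ Hb (Rb r)
      · exact key _ _ Hb (Rc r)
  have : Finite W := Finite.of_surjective F hF
  have hle : Nat.card W ≤ 48 := by
    have := Nat.card_le_card_of_surjective F hF
    simpa using this
  let φ : W →* Equiv.Perm (Fin 6) := cs.lift ⟨b3Perm, b3Perm_liftable M h12 h23 h13⟩
  have hφ : ∀ i, φ (cs.simple i) = b3Perm i := fun i => cs.lift_apply_simple _ i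
  have hwalk : ∀ k, k ≤ 48 → φ (x k) = b3Walk k := by
    intro k
    induction k with
    | zero => intro _; rw [hx0, map_one]; rfl
    | succ k ih => intro hk; rw [hx k (by omega), map_mul, hφ, ih (by omega)]; rfl
  have hinj : ∀ k l, k < 48 → l < 48 → φ (x k) = φ (x l) → k = l := by
    intro k l hk hl h
    rw [hwalk k hk.le, hwalk l hl.le] at h
    exact congrArg Fin.val (b3Walk_inj ⟨k, hk⟩ ⟨l, hl⟩ h)
  let g : Fin 48 → W := fun k => x k
  have hg : Function.Injective g := fun k l h =>
    Fin.ext (hinj k l k.2 l.2 (congrArg φ h))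
  have hgb : Function.Bijective g := hg.bijective_of_nat_card_le (by simpa using hle)
  have hsurj : ∀ w : W, ∃ k, k < 48 ∧ x k = w := by
    intro w
    obtain ⟨k, hk⟩ := hgb.2 w
    exact ⟨k, k.2, hk⟩
  refine ⟨fun k l hk hl h => hinj k l hk hl (congrArg φ h), hsurj, ?_, ?_⟩
  · have := Nat.card_eq_of_bijective g hgb
    simpa using this.symm
  · obtain ⟨k, hk, hk'⟩ := hsurj (x 48)
    have h0 : k = 0 := hinj k 0 hk (by norm_num) (by
      rw [hk', hwalk 48 le_rfl, b3Walk_end, hx0, map_one])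
    rw [← hk', h0, hx0]
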